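/- arXiv:2502.17707 — 2 statements merged into one kernel-verified Lean document; each statement's English description precedes it below -/
import Mathlib

section
/- Suppose there exists a hereditarily separable, everywhere non-Hausdorff n-manifold M with a nonempty sorted open Hausdorff subset U such that NH(x) is a singleton for every x ∈ U. Then there exists a topological space which is Hausdorff, regular, locally compact, first countable, hereditarily separable and not Lindelöf (i.e. a locally compact first countable S-space). -/
open Set Topology TopologicalSpace

universe u

/-- Two points are inseparable (`x ⋈ y`): distinct, and every open set containing
one meets every open set containing the other. -/
def Bump {X : Type u} [TopologicalSpace X] (x y : X) : Prop :=
  x ≠ y ∧ ∀ U V : Set X, IsOpen U → IsOpen V → x ∈ U → y ∈ V → (U ∩ V).Nonempty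

/-- `NH A` = points inseparable from some point of `A`. -/
def NH {X : Type u} [TopologicalSpace X] (A : Set X) : Set X :=
  {y | ∃ x ∈ A, Bump y x}

/-- `NHpt x = NH {x}`. -/
def NHpt {X : Type u} [TopologicalSpace X] (x : X) : Set X := NH {x}

/-- An Euclidean subset: open and homeomorphic to ℝⁿ. -/
def IsEuclidean {X : Type u} [TopologicalSpace X] (n : ℕ) (U : Set X) : Prop :=
  IsOpen U ∧ Nonempty (U ≃ₜ EuclideanSpace ℝ (Fin n))

/-- An `n`-manifold: nonempty connected space, every point has an open
neighborhood homeomorphic to ℝⁿ (Hausdorffness NOT assumed). -/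
def IsNManifold (X : Type u) [TopologicalSpace X] (n : ℕ) : Prop :=
  ConnectedSpace X ∧ ∀ x : X, ∃ U : Set X, x ∈ U ∧ IsEuclidean n U

/-- Locally Hausdorff space. -/
def LocallyHausdorff (X : Type u) [TopologicalSpace X] : Prop :=
  ∀ x : X, ∃ U : Set X, IsOpen U ∧ x ∈ U ∧ T2Space U

/-- Quasi-countably-compact subset: every countable open cover has a finite subcover. -/
def QuasiCountablyCompact {X : Type u} [TopologicalSpace X] (K : Set X) : Prop :=
  ∀ U : ℕ → Set X, (∀ n, IsOpen (U n)) → K ⊆ ⋃ n, U n →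
    ∃ s : Finset ℕ, K ⊆ ⋃ n ∈ s, U n

/-- `A` is `κ`-Baire in `X`: not covered by fewer than `κ` nowhere dense sets. -/
def KappaBaire {X : Type u} [TopologicalSpace X] (κ : Cardinal.{u}) (A : Set X) : Prop :=
  ∀ (ι : Type u) (F : ι → Set X), Cardinal.mk ι < κ →
    (∀ i, IsNowhereDense (F i)) → ¬ A ⊆ ⋃ i, F i

/-- `S` is a scan of `A` in `X`. -/
def IsScan {X : Type u} [TopologicalSpace X] (S A : Set X) : Prop :=
  S ⊆ NH A ∧ ∀ x ∈ A, ((NHpt x).Nonempty ↔ (NHpt x ∩ S).Nonempty)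

/-- `U` is sorted: a continuous map from `closure U` to a Hausdorff space,
injective on `U`. -/
def IsSorted {X : Type u} [TopologicalSpace X] (U : Set X) : Prop :=
  ∃ (H : Type u) (tH : TopologicalSpace H) (f : closure U → H),
    @T2Space H tH ∧ @Continuous _ H _ tH f ∧
      ∀ a b : closure U, (a : X) ∈ U → (b : X) ∈ U → f a = f b → a = b

/-- `U` is weakly sorted: a continuous map from `closure U` to a Hausdorff space,
finite-to-one on `U`. -/
def IsWeaklySorted {X : Type u} [TopologicalSpace X] (U : Set X) : Prop :=
  ∃ (H : Type u) (tH : TopologicalSpace H) (f : closure U → H),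
    @T2Space H tH ∧ @Continuous _ H _ tH f ∧
      ∀ h : H, {a : closure U | (a : X) ∈ U ∧ f a = h}.Finite

/-- H-maximal: open Hausdorff, with no open Hausdorff proper superset. -/
def IsHMaximal {X : Type u} [TopologicalSpace X] (U : Set X) : Prop :=
  IsOpen U ∧ T2Space U ∧
    ∀ V : Set X, IsOpen V → T2Space V → U ⊆ V → V = U

/-- CH-maximal: connected open Hausdorff, with no connected open Hausdorff
proper superset. -/
def IsCHMaximal {X : Type u} [TopologicalSpace X] (U : Set X) : Prop :=
  IsConnected U ∧ IsOpen U ∧ T2Space U ∧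
    ∀ V : Set X, IsConnected V → IsOpen V → T2Space V → U ⊆ V → V = U

/-- `U` is f-simple at `p`: every open `V ∋ p` contains an open `W ∋ p` such that
`W ∩ U` has finitely many connected components. -/
def FSimpleAt {X : Type u} [TopologicalSpace X] (U : Set X) (p : X) : Prop :=
  ∀ V : Set X, IsOpen V → p ∈ V → ∃ W : Set X, IsOpen W ∧ p ∈ W ∧ W ⊆ V ∧
    {C : Set X | ∃ z ∈ W ∩ U, C = connectedComponentIn (W ∩ U) z}.Finite

/-- f-rim-simple: f-simple at every boundary point. -/
def FRimSimple {X : Type u} [TopologicalSpace X] (U : Set X) : Prop :=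
  ∀ p ∈ closure U \ U, FSimpleAt U p

/-- cov(ℳ): least cardinality of a family of nowhere dense subsets of ℝ covering ℝ. -/
noncomputable def covMeager : Cardinal :=
  sInf {c : Cardinal | ∃ (ι : Type) (F : ι → Set ℝ),
    Cardinal.mk ι = c ∧ (∀ i, IsNowhereDense (F i)) ∧ ⋃ i, F i = Set.univ}

/-- A locally compact first countable S-space: Hausdorff, regular, locally compact,
first countable, hereditarily separable, not Lindelöf. -/
def IsLCFCSSpace (S : Type) [TopologicalSpace S] : Prop :=
  T2Space S ∧ RegularSpace S ∧ LocallyCompactSpace S ∧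
    FirstCountableTopology S ∧ (∀ A : Set S, SeparableSpace A) ∧ ¬ LindelofSpace S

/-!
Take a compact `K ⊆ U` with nonempty interior; the S-space is `NH K`. The map sorting `U` identifies
each `x ∈ U` with its inseparable partner, so it is injective on `NH U`, which is therefore
Hausdorff. Moreover `NH K` is closed, so it inherits local compactness.

For an open Hausdorff `V`, `NH V` lies in the frontier of `V`, hence is nowhere dense, so `NH` of a
Lindelöf set is meagre. If `NH K` were Lindelöf, then `K ⊆ NH (NH K)` would be meagre, contradicting
the Baire category theorem.
-/

section Bump

variable {X : Type u} [TopologicalSpace X] {x y : X} {A B K U V : Set X}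

theorem bump_iff_clusterPt : Bump x y ↔ x ≠ y ∧ ClusterPt x (𝓝 y) := by
  rw [(nhds_basis_opens x).clusterPt_iff (nhds_basis_opens y)]
  exact and_congr_right fun _ =>
    ⟨fun h _ hU _ hV => h _ _ hU.2 hV.2 hU.1 hV.1,
      fun h _ _ hU hV hx hy => h ⟨hx, hU⟩ ⟨hy, hV⟩⟩

theorem Bump.symm (h : Bump x y) : Bump y x :=
  ⟨h.1.symm, fun U V hU hV hy hx => inter_comm V U ▸ h.2 V U hV hU hx hy⟩

theorem mem_NHpt : y ∈ NHpt x ↔ Bump y x :=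
  exists_eq_left

theorem NH_mono (h : A ⊆ B) : NH A ⊆ NH B :=
  fun _ ⟨x, hx, hyx⟩ => ⟨x, h hx, hyx⟩

theorem subset_NH_NH (h : ∀ x ∈ A, (NHpt x).Nonempty) : A ⊆ NH (NH A) := fun x hx => by
  obtain ⟨y, hy⟩ := h x hx
  exact ⟨y, ⟨x, hx, mem_NHpt.1 hy⟩, (mem_NHpt.1 hy).symm⟩

theorem Bump.apply_eq {H : Type*} [TopologicalSpace H] [T2Space H] {s : Set X} {f : s → H}
    (hf : Continuous f) (h : Bump y x) (hs : s ∈ 𝓝 x) (hy : y ∈ s) :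
    f ⟨y, hy⟩ = f ⟨x, mem_of_mem_nhds hs⟩ := by
  have : (𝓝 y ⊓ 𝓝 x).NeBot := (bump_iff_clusterPt.1 h).2
  have : (𝓝 (⟨y, hy⟩ : s) ⊓ 𝓝 ⟨x, mem_of_mem_nhds hs⟩).NeBot := by
    rw [nhds_subtype, nhds_subtype, ← Filter.comap_inf]
    exact this.comap_of_range_mem (Filter.mem_inf_of_right (Subtype.range_val ▸ hs))
  exact tendsto_nhds_unique ((hf.tendsto _).mono_left inf_le_left)
    ((hf.tendsto _).mono_left inf_le_right)

theorem disjoint_NH_self (hV : IsOpen V) [T2Space V] : Disjoint (NH V) V := by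
  refine Set.disjoint_left.2 fun y ⟨x, hx, hyx⟩ hy => hyx.1 ?_
  exact congrArg Subtype.val (hyx.apply_eq continuous_id (hV.mem_nhds hx) hy)

theorem NH_subset_closure (hV : IsOpen V) : NH V ⊆ closure V := fun _ ⟨_, hx, hyx⟩ =>
  mem_closure_iff.2 fun W hW hy => hyx.2 W V hW hV hy hx

theorem isNowhereDense_NH (hV : IsOpen V) [T2Space V] : IsNowhereDense (NH V) := by
  have hsub : NH V ⊆ frontier V := fun _ hy =>
    hV.frontier_eq ▸ ⟨NH_subset_closure hV hy, (disjoint_NH_self hV).notMem_of_mem_left hy⟩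
  exact IsNowhereDense.mono hsub
    (isClosed_frontier.isNowhereDense_iff.2
      (frontier_compl V ▸ interior_frontier hV.isClosed_compl))

theorem union_NH_eq_setOfPred_clusterPt (hK : IsCompact K) :
    K ∪ NH K = {y | ClusterPt y (𝓝ˢ K)} := by
  ext y
  have hcluster : ClusterPt y (𝓝ˢ K) ↔ ∃ x ∈ K, ClusterPt y (𝓝 x) := by
    simp only [ClusterPt, Filter.neBot_iff, ne_eq, ← disjoint_iff, hK.disjoint_nhdsSet_right,
      not_forall, exists_prop]
  rw [mem_ofPred_eq, hcluster]
  constructor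
  · rintro (hy | ⟨x, hx, hyx⟩)
    · exact ⟨y, hy, ClusterPt.of_le_nhds le_rfl⟩
    · exact ⟨x, hx, (bump_iff_clusterPt.1 hyx).2⟩
  · rintro ⟨x, hx, hyx⟩
    rcases eq_or_ne y x with rfl | hne
    · exact Or.inl hx
    · exact Or.inr ⟨x, hx, bump_iff_clusterPt.2 ⟨hne, hyx⟩⟩

theorem isClosed_NH (hU : IsOpen U) [T2Space U] (hK : IsCompact K) (hKU : K ⊆ U) :
    IsClosed (NH K) := by
  have hdisj : Disjoint (NH K) U := (disjoint_NH_self hU).mono_left (NH_mono hKU)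
  have heq : NH K = (K ∪ NH K) \ U := by
    rw [union_sdiff_distrib, sdiff_eq_empty.2 hKU, empty_union, hdisj.sdiff_eq_left]
  rw [heq, union_NH_eq_setOfPred_clusterPt hK]
  exact isClosed_setOfPred_clusterPt.sdiff hU

end Bump

section LocallyHausdorff

variable {X : Type u} [TopologicalSpace X] {A B W : Set X}

theorem LocallyHausdorff.not_isMeagre_of_isOpen [LocallyCompactSpace X] (hX : LocallyHausdorff X)
    (hW : IsOpen W) (hne : W.Nonempty) : ¬ IsMeagre W := by
  intro hmeagre
  obtain ⟨x, hxW⟩ := hne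
  obtain ⟨V, hV, hxV, _⟩ := hX x
  have := hV.locallyCompactSpace
  exact _root_.not_isMeagre_of_isOpen (hW.preimage continuous_subtype_val) ⟨⟨x, hxV⟩, hxW⟩
    (hmeagre.preimage_of_isOpenMap continuous_subtype_val hV.isOpenMap_subtype_val)

theorem LocallyHausdorff.isMeagre_NH (hX : LocallyHausdorff X) (hB : IsLindelof B) :
    IsMeagre (NH B) := by
  choose V hV hxV hT2 using hX
  obtain ⟨t, ht, -, hBt⟩ := hB.elim_nhds_subcover V fun x _ => (hV x).mem_nhds (hxV x)
  refine (isMeagre_biUnion ht fun x _ => (isNowhereDense_NH (hV x)).isMeagre).mono ?_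
  rintro y ⟨x, hx, hyx⟩
  obtain ⟨z, hz, hxz⟩ := mem_iUnion₂.1 (hBt hx)
  exact mem_biUnion hz ⟨x, hxz, hyx⟩

theorem LocallyHausdorff.not_isLindelof_NH [LocallyCompactSpace X] (hX : LocallyHausdorff X)
    (hA : (interior A).Nonempty) (hne : ∀ x ∈ A, (NHpt x).Nonempty) : ¬ IsLindelof (NH A) :=
  fun hL => hX.not_isMeagre_of_isOpen isOpen_interior hA
    ((hX.isMeagre_NH hL).mono (interior_subset.trans (subset_NH_NH hne)))

end LocallyHausdorff

section IsSorted

variable {X : Type u} [TopologicalSpace X] {U : Set X}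

theorem IsSorted.t2Space (hU : IsSorted U) : T2Space U := by
  obtain ⟨H, _, f, _, hf, hinj⟩ := hU
  refine T2Space.of_injective_continuous (f := f ∘ inclusion subset_closure) ?_
    (hf.comp (continuous_inclusion subset_closure))
  exact fun a b hab => inclusion_injective subset_closure (hinj _ _ a.2 b.2 hab)

theorem IsSorted.t2Space_NH (hU : IsSorted U) (hUo : IsOpen U)
    (hsub : ∀ x ∈ U, (NHpt x).Subsingleton) : T2Space (NH U) := by
  obtain ⟨H, _, f, _, hf, hinj⟩ := hU
  have hcl := NH_subset_closure hUo
  refine T2Space.of_injective_continuous (f := f ∘ inclusion hcl) ?_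
    (hf.comp (continuous_inclusion hcl))
  rintro ⟨y, hy⟩ ⟨y', hy'⟩ (hff : f ⟨y, hcl hy⟩ = f ⟨y', hcl hy'⟩)
  obtain ⟨x, hx, hyx⟩ := id hy
  obtain ⟨x', hx', hyx'⟩ := id hy'
  have hfx := hyx.apply_eq hf (Filter.mem_of_superset (hUo.mem_nhds hx) subset_closure) (hcl hy)
  have hfx' :=
    hyx'.apply_eq hf (Filter.mem_of_superset (hUo.mem_nhds hx') subset_closure) (hcl hy')
  obtain rfl : x = x' :=
    congrArg Subtype.val (hinj _ _ hx hx' (hfx.symm.trans (hff.trans hfx')))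
  exact Subtype.ext (hsub x hx (mem_NHpt.2 hyx) (mem_NHpt.2 hyx'))

end IsSorted

theorem separableSpace_of_isEmbedding {X Y : Type*} [TopologicalSpace X] [TopologicalSpace Y]
    {f : Y → X} (hf : IsEmbedding f) (hX : ∀ A : Set X, SeparableSpace A) (B : Set Y) :
    SeparableSpace B :=
  have := hX (f '' B)
  (hf.homeomorphImage B).symm.isQuotientMap.separableSpace

section IsNManifold

variable {X : Type u} [TopologicalSpace X] {n : ℕ}

theorem IsNManifold.exists_isOpenEmbedding (hX : IsNManifold X n) (x : X) :
    ∃ (φ : EuclideanSpace ℝ (Fin n) → X) (p : EuclideanSpace ℝ (Fin n)),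
      IsOpenEmbedding φ ∧ φ p = x := by
  obtain ⟨V, hxV, hV, ⟨e⟩⟩ := hX.2 x
  exact ⟨Subtype.val ∘ e.symm, e ⟨x, hxV⟩,
    hV.isOpenEmbedding_subtypeVal.comp e.symm.isOpenEmbedding, by simp⟩

theorem IsNManifold.locallyCompactSpace (hX : IsNManifold X n) : LocallyCompactSpace X := by
  refine ⟨fun x N hN => ?_⟩
  obtain ⟨φ, p, hφ, rfl⟩ := hX.exists_isOpenEmbedding x
  obtain ⟨L, hL, hLN, hLc⟩ := local_compact_nhds (hφ.continuous.continuousAt hN)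
  exact ⟨φ '' L, hφ.isOpenMap.image_mem_nhds hL, image_subset_iff.2 hLN, hLc.image hφ.continuous⟩

theorem IsNManifold.firstCountableTopology (hX : IsNManifold X n) : FirstCountableTopology X := by
  refine ⟨fun x => ?_⟩
  obtain ⟨φ, p, hφ, rfl⟩ := hX.exists_isOpenEmbedding x
  rw [← hφ.map_nhds_eq]
  infer_instance

theorem IsNManifold.locallyHausdorff (hX : IsNManifold X n) : LocallyHausdorff X := fun x => by
  obtain ⟨V, hxV, hV, ⟨e⟩⟩ := hX.2 x
  exact ⟨V, hV, hxV, e.isEmbedding.t2Space⟩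

end IsNManifold

theorem isLCFCSSpace_NH {X : Type} [TopologicalSpace X] [LocallyCompactSpace X]
    [FirstCountableTopology X] (hX : LocallyHausdorff X) (hHS : ∀ A : Set X, SeparableSpace A)
    {U K : Set X} (hUo : IsOpen U) (hU : IsSorted U) (hsingle : ∀ x ∈ U, ∃ y, NHpt x = {y})
    (hK : IsCompact K) (hKU : K ⊆ U) (hKne : (interior K).Nonempty) :
    IsLCFCSSpace (NH K) := by
  have := hU.t2Space
  have hNHU : T2Space (NH U) := hU.t2Space_NH hUo fun x hx => by
    obtain ⟨y, hy⟩ := hsingle x hx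
    exact hy ▸ subsingleton_singleton
  have hNHK : T2Space (NH K) := (IsEmbedding.inclusion (NH_mono hKU)).t2Space
  have hloc : LocallyCompactSpace (NH K) := (isClosed_NH hUo hK hKU).locallyCompactSpace
  have hnotLindelof : ¬ IsLindelof (NH K) := hX.not_isLindelof_NH hKne fun x hx => by
    obtain ⟨y, hy⟩ := hsingle x (hKU hx)
    exact hy ▸ singleton_nonempty y
  exact ⟨hNHK, inferInstance, hloc, inferInstance,
    separableSpace_of_isEmbedding IsEmbedding.subtypeVal hHS,
    fun h => hnotLindelof (isLindelof_iff_lindelofSpace.2 h)⟩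

theorem stmt5_general {X : Type} [TopologicalSpace X] [LocallyCompactSpace X]
    [FirstCountableTopology X] (hX : LocallyHausdorff X) (hHS : ∀ A : Set X, SeparableSpace A)
    {U : Set X} (hUne : U.Nonempty) (hUo : IsOpen U) (hU : IsSorted U)
    (hsingle : ∀ x ∈ U, ∃ y, NHpt x = {y}) :
    ∃ (S : Type) (tS : TopologicalSpace S), @IsLCFCSSpace S tS := by
  obtain ⟨x, hx⟩ := hUne
  obtain ⟨K, hK, hxK, hKU⟩ := exists_compact_subset hUo hx
  exact ⟨NH K, inferInstance, isLCFCSSpace_NH hX hHS hUo hU hsingle hK hKU ⟨x, hxK⟩⟩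

/-- If there is a hereditarily separable everywhere non-Hausdorff
manifold with a nonempty sorted open Hausdorff subset `U` on which each `NH(x)` is
a singleton, then there is a locally compact first countable S-space. -/
theorem stmt5 (n : ℕ) (M : Type) [TopologicalSpace M]
    (hM : IsNManifold M n)
    (hHS : ∀ A : Set M, SeparableSpace A)
    (hENH : ∀ x : M, (NHpt x).Nonempty)
    (U : Set M) (hUne : U.Nonempty) (hUopen : IsOpen U) (hUT2 : T2Space U)
    (hUsorted : IsSorted U)
    (hsingle : ∀ x ∈ U, ∃ y, NHpt x = {y}) :
    ∃ (S : Type) (tS : TopologicalSpace S), @IsLCFCSSpace S tS := by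
  have := hM.locallyCompactSpace
  have := hM.firstCountableTopology
  exact stmt5_general hM.locallyHausdorff hHS hUne hUopen hUsorted hsingle
end

section
/- Let M be a 1-manifold and x ∈ M such that for all y₀, y₁ ∈ NH(x) there exists a homeomorphism h : M → M with h(x) = x and h(y₀) = y₁. Then NH(x) is a discrete subset of M. -/
open Set Topology TopologicalSpace

universe u

/-!
A closed subset `A` of a space locally homeomorphic to `ℝ` that meets a chart without filling it has
a point which is the end of an interval otherwise missing `A`, namely the point of `A` nearest, in
the chart, to a point outside `A`. If homeomorphisms preserving `A` act transitively on `A`, then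
every point of `A` is such an end, so `A` meets each chart in a countable closed set. By the Baire
category theorem this countable set has an isolated point, and by transitivity all points of `A`
are isolated. This applies to `NH(x)`, which is closed and has empty interior: a chart around `x`
misses `NH(x)` but meets every neighborhood of each of its points.
-/

section Accessible

variable {X Y : Type*} [TopologicalSpace X] [TopologicalSpace Y]

/-- A point `a` of `A` is accessible from the complement of `A`: arbitrarily close to `a` there is a
connected set, not reduced to `a`, which meets `A` only at `a`. Connected sets are used in place of
arcs, and are required to be small so that the notion is local. -/
def IsAccessible (A : Set X) (a : X) : Prop :=
  ∀ U ∈ 𝓝 a, ∃ S ⊆ U, IsPreconnected S ∧ S.Nontrivial ∧ S ∩ A = {a}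

theorem IsAccessible.mem {A : Set X} {a : X} (ha : IsAccessible A a) : a ∈ A := by
  obtain ⟨S, -, -, -, hSA⟩ := ha univ Filter.univ_mem
  exact (hSA.symm.subset rfl).2

theorem isAccessible_preimage_iff {f : X → Y} (hf : IsOpenEmbedding f) {A : Set Y} {a : X} :
    IsAccessible (f ⁻¹' A) a ↔ IsAccessible A (f a) := by
  constructor
  · intro ha U hU
    obtain ⟨S, hSU, hS, hSnt, hSA⟩ := ha _ (hf.continuous.continuousAt hU)
    refine ⟨f '' S, image_subset_iff.2 hSU, hS.image f hf.continuous.continuousOn,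
      hSnt.image hf.injective, ?_⟩
    rw [← image_inter_preimage, hSA, image_singleton]
  · intro ha U hU
    obtain ⟨S, hSU, hS, hSnt, hSA⟩ := ha _ (hf.isOpenMap.image_mem_nhds hU)
    obtain ⟨T, hTU, rfl⟩ := subset_image_iff.1 hSU
    refine ⟨T, hTU, hf.isInducing.isPreconnected_image.1 hS, nontrivial_of_image f T hSnt, ?_⟩
    rwa [← image_inter_preimage, ← image_singleton, hf.injective.image_injective.eq_iff] at hSA

theorem isAccessible_of_infDist_eq_dist {E : Type*} [NormedAddCommGroup E] [NormedSpace ℝ E]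
    {C : Set E} {c p : E} (hc : c ∈ C) (hp : p ∉ C) (hcp : Metric.infDist p C = dist p c) :
    IsAccessible C c := by
  intro U hU
  obtain ⟨ε, hε, hεU⟩ := Metric.mem_nhds_iff.1 hU
  set B := Metric.ball c ε ∩ Metric.ball p (dist p c)
  have hdist : dist p c ≠ 0 := dist_ne_zero.2 fun h ↦ hp (h ▸ hc)
  have hc_closure : c ∈ closure B := by
    refine Metric.isOpen_ball.inter_closure ⟨Metric.mem_ball_self hε, ?_⟩
    rw [closure_ball p hdist, Metric.mem_closedBall']
  have hB_disjoint : Disjoint B C :=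
    (hcp ▸ Metric.disjoint_ball_infDist).mono_left inter_subset_right
  refine ⟨insert c B, insert_subset (mem_of_mem_nhds hU) (inter_subset_left.trans hεU), ?_, ?_, ?_⟩
  · have hB_convex : Convex ℝ B := (convex_ball c ε).inter (convex_ball p _)
    exact hB_convex.isPreconnected.subset_closure (subset_insert c B)
      (insert_subset hc_closure subset_closure)
  · obtain ⟨b, hb⟩ : B.Nonempty := closure_nonempty_iff.1 ⟨c, hc_closure⟩
    exact ⟨c, mem_insert c B, b, mem_insert_of_mem c hb,
      fun h ↦ hB_disjoint.notMem_of_mem_left hb (h ▸ hc)⟩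
  · rw [insert_inter_of_mem hc, hB_disjoint.inter_eq, insert_empty_eq]

theorem exists_isAccessible_of_isClosed {E : Type*} [NormedAddCommGroup E] [NormedSpace ℝ E]
    [ProperSpace E] {C : Set E} (hC : IsClosed C) (hne : C.Nonempty) (huniv : C ≠ univ) :
    ∃ c, IsAccessible C c := by
  obtain ⟨p, hp⟩ := (ne_univ_iff_exists_notMem C).1 huniv
  obtain ⟨c, hc, hcp⟩ := hC.exists_infDist_eq_dist hne p
  exact ⟨c, isAccessible_of_infDist_eq_dist hc hp hcp⟩

theorem IsAccessible.nhdsWithin_inter_Ioi_or_Iio_eq_bot {α : Type*} [TopologicalSpace α]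
    [LinearOrder α] [OrderClosedTopology α] {C : Set α} {c : α} (hc : IsAccessible C c) :
    𝓝[C ∩ Ioi c] c = ⊥ ∨ 𝓝[C ∩ Iio c] c = ⊥ := by
  obtain ⟨S, -, hS, hSnt, hSC⟩ := hc univ Filter.univ_mem
  have hcS : c ∈ S := (hSC.symm.subset rfl).1
  have eq_of_mem {t : α} (htS : t ∈ S) (htC : t ∈ C) : t = c := hSC.subset ⟨htS, htC⟩
  obtain ⟨d, hdS, hdc⟩ := hSnt.exists_ne c
  simp only [← Filter.empty_mem_iff_bot, mem_nhdsWithin]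
  rcases hdc.lt_or_gt with hdc | hcd
  · refine Or.inr ⟨Ioi d, isOpen_Ioi, hdc, fun t ⟨hdt, htC, htc⟩ ↦ ?_⟩
    exact htc.ne (eq_of_mem (hS.ordConnected.out hdS hcS ⟨le_of_lt hdt, le_of_lt htc⟩) htC)
  · refine Or.inl ⟨Iio d, isOpen_Iio, hcd, fun t ⟨htd, htC, hct⟩ ↦ ?_⟩
    exact hct.ne' (eq_of_mem (hS.ordConnected.out hcS hdS ⟨le_of_lt hct, le_of_lt htd⟩) htC)

theorem countable_of_forall_isAccessible {α : Type*} [TopologicalSpace α] [LinearOrder α]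
    [OrderTopology α] [SecondCountableTopology α] {C : Set α} (hC : ∀ c ∈ C, IsAccessible C c) :
    C.Countable := by
  refine (countable_setOfPred_isolated_right_within (s := C) |>.union
    (countable_setOfPred_isolated_left_within (s := C))).mono fun c hc ↦ ?_
  exact (hC c hc).nhdsWithin_inter_Ioi_or_Iio_eq_bot.imp (⟨hc, ·⟩) (⟨hc, ·⟩)

end Accessible

section Isolated

variable {X Y : Type*} [TopologicalSpace X] [TopologicalSpace Y]

theorem exists_isOpen_singleton_of_countable [T1Space X] [BaireSpace X] [Countable X]
    [Nonempty X] : ∃ x : X, IsOpen {x} := by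
  obtain ⟨x, hx⟩ := nonempty_interior_of_iUnion_of_closed (fun x : X ↦ isClosed_singleton (x := x))
    (iUnion_of_singleton X)
  exact ⟨x, interior_eq_iff_isOpen.1 (hx.subset_singleton_iff.1 interior_subset)⟩

theorem exists_nhdsWithin_eq_pure_of_countable [T1Space X] {C : Set X} [BaireSpace C]
    (hC : C.Countable) (hne : C.Nonempty) : ∃ c, 𝓝[C] c = pure c := by
  have := hC.to_subtype
  have := hne.to_subtype
  obtain ⟨⟨c, hc⟩, hopen⟩ := exists_isOpen_singleton_of_countable (X := C)
  refine ⟨c, ?_⟩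
  rw [nhdsWithin_eq_map_subtype_coe hc, isOpen_singleton_iff_nhds_eq_pure _ |>.1 hopen,
    Filter.map_pure]

theorem nhdsWithin_preimage_eq_pure_iff {f : X → Y} (hf : IsOpenEmbedding f) {A : Set Y} {a : X} :
    𝓝[f ⁻¹' A] a = pure a ↔ 𝓝[A] (f a) = pure (f a) := by
  rw [← hf.map_nhdsWithin_preimage_eq, ← Filter.map_pure, Filter.map_inj hf.injective]

end Isolated

section Homogeneous

variable {X : Type*} [TopologicalSpace X] {A : Set X} {a : X}

/-- The homeomorphisms of the ambient space which preserve `A` act transitively on `A`. -/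
def IsAmbientlyHomogeneous (A : Set X) : Prop :=
  ∀ a ∈ A, ∀ b ∈ A, ∃ h : X ≃ₜ X, h ⁻¹' A = A ∧ h a = b

theorem IsAmbientlyHomogeneous.forall_isAccessible (hA : IsAmbientlyHomogeneous A)
    (ha : IsAccessible A a) : ∀ b ∈ A, IsAccessible A b := by
  intro b hb
  obtain ⟨h, hhA, rfl⟩ := hA a ha.mem b hb
  rwa [← isAccessible_preimage_iff h.isOpenEmbedding, hhA]

theorem IsAmbientlyHomogeneous.isDiscrete_of_nhdsWithin_eq_pure (hA : IsAmbientlyHomogeneous A)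
    (ha : 𝓝[A] a = pure a) : IsDiscrete A := by
  have haA : a ∈ A := Filter.mem_pure.1 (ha ▸ self_mem_nhdsWithin)
  refine isDiscrete_iff_nhdsWithin.2 fun b hb ↦ ?_
  obtain ⟨h, hhA, rfl⟩ := hA a haA b hb
  rwa [← nhdsWithin_preimage_eq_pure_iff h.isOpenEmbedding, hhA]

theorem IsAmbientlyHomogeneous.isDiscrete_of_isOpenEmbedding_real (hA : IsAmbientlyHomogeneous A)
    (hclosed : IsClosed A) {g : ℝ → X} (hg : IsOpenEmbedding g)
    (hne : (g ⁻¹' A).Nonempty) (huniv : g ⁻¹' A ≠ univ) : IsDiscrete A := by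
  have hC : IsClosed (g ⁻¹' A) := hclosed.preimage hg.continuous
  have hcountable : (g ⁻¹' A).Countable := by
    obtain ⟨c, hc⟩ := exists_isAccessible_of_isClosed hC hne huniv
    have hA_accessible := hA.forall_isAccessible ((isAccessible_preimage_iff hg).1 hc)
    exact countable_of_forall_isAccessible fun t ht ↦
      (isAccessible_preimage_iff hg).2 (hA_accessible (g t) ht)
  have := hC.completeSpace_coe
  obtain ⟨c, hc⟩ := exists_nhdsWithin_eq_pure_of_countable hcountable hne
  exact hA.isDiscrete_of_nhdsWithin_eq_pure ((nhdsWithin_preimage_eq_pure_iff hg).1 hc)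

end Homogeneous

section NHpt

variable {X Y : Type u} [TopologicalSpace X] [TopologicalSpace Y]

theorem mem_NHpt_iff_bump {x y : X} : y ∈ NHpt x ↔ Bump y x := by
  simp only [NHpt, NH, mem_singleton_iff, exists_eq_left, mem_ofPred_eq]

theorem bump_iff_not_disjoint_nhds {x y : X} : Bump x y ↔ x ≠ y ∧ ¬ Disjoint (𝓝 x) (𝓝 y) := by
  refine and_congr_right fun _ ↦ ?_
  simp only [(nhds_basis_opens x).disjoint_iff (nhds_basis_opens y), not_exists, not_and,
    not_disjoint_iff_nonempty_inter]
  grind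

theorem bump_map_iff (h : X ≃ₜ Y) {x y : X} : Bump (h x) (h y) ↔ Bump x y := by
  rw [bump_iff_not_disjoint_nhds, bump_iff_not_disjoint_nhds, h.injective.ne_iff,
    ← h.map_nhds_eq, ← h.map_nhds_eq, Filter.disjoint_map h.injective]

theorem preimage_NHpt (h : X ≃ₜ Y) (x : X) : h ⁻¹' NHpt (h x) = NHpt x := by
  ext y
  rw [mem_preimage, mem_NHpt_iff_bump, mem_NHpt_iff_bump, bump_map_iff]

theorem disjoint_NHpt_of_isOpen {U : Set X} (hU : IsOpen U) [T2Space U] {x : X} (hx : x ∈ U) :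
    Disjoint U (NHpt x) := by
  refine disjoint_left.2 fun y hy hyx ↦ ?_
  obtain ⟨hne, hnhds⟩ := bump_iff_not_disjoint_nhds.1 (mem_NHpt_iff_bump.1 hyx)
  apply hnhds
  have hsep : Disjoint (𝓝 (⟨y, hy⟩ : U)) (𝓝 ⟨x, hx⟩) :=
    disjoint_nhds_nhds.2 (Subtype.coe_ne_coe.1 hne)
  rwa [← Filter.disjoint_map Subtype.val_injective, hU.isOpenEmbedding_subtypeVal.map_nhds_eq,
    hU.isOpenEmbedding_subtypeVal.map_nhds_eq] at hsep

theorem isClosed_NHpt (hX : LocallyHausdorff X) (x : X) : IsClosed (NHpt x) := by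
  refine isClosed_of_closure_subset fun y hy ↦ ?_
  obtain ⟨U, hU, hxU, _⟩ := hX x
  have hyU : y ∉ U := fun hyU ↦ ((disjoint_NHpt_of_isOpen hU hxU).closure_right hU).le_bot ⟨hyU, hy⟩
  refine mem_NHpt_iff_bump.2 ⟨fun h ↦ hyU (h ▸ hxU), fun V W hV hW hyV hxW ↦ ?_⟩
  obtain ⟨z, hzV, hzx⟩ := mem_closure_iff.1 hy V hV hyV
  exact (mem_NHpt_iff_bump.1 hzx).2 V W hV hW hzV hxW

theorem interior_NHpt (hX : LocallyHausdorff X) (x : X) : interior (NHpt x) = ∅ := by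
  refine eq_empty_of_forall_notMem fun y hy ↦ ?_
  obtain ⟨U, hU, hxU, _⟩ := hX x
  obtain ⟨z, hz, hzU⟩ :=
    (mem_NHpt_iff_bump.1 (interior_subset hy)).2 _ U isOpen_interior hU hy hxU
  exact (disjoint_NHpt_of_isOpen hU hxU).le_bot ⟨hzU, interior_subset hz⟩

theorem isAmbientlyHomogeneous_NHpt {x : X}
    (hhom : ∀ y₀ ∈ NHpt x, ∀ y₁ ∈ NHpt x, ∃ h : X ≃ₜ X, h x = x ∧ h y₀ = y₁) :
    IsAmbientlyHomogeneous (NHpt x) := by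
  intro y₀ hy₀ y₁ hy₁
  obtain ⟨h, hx, hy⟩ := hhom y₀ hy₀ y₁ hy₁
  exact ⟨h, by simpa only [hx] using preimage_NHpt h x, hy⟩

end NHpt

section Charts

variable {X : Type u} [TopologicalSpace X]

theorem locallyHausdorff_of_isEuclidean {n : ℕ}
    (hX : ∀ x : X, ∃ U : Set X, x ∈ U ∧ IsEuclidean n U) : LocallyHausdorff X := by
  intro x
  obtain ⟨U, hxU, hU, ⟨e⟩⟩ := hX x
  exact ⟨U, hU, hxU, e.symm.t2Space⟩

theorem IsEuclidean.exists_isOpenEmbedding_real {U : Set X} (hU : IsEuclidean 1 U) :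
    ∃ g : ℝ → X, IsOpenEmbedding g ∧ range g = U := by
  obtain ⟨hopen, ⟨e⟩⟩ := hU
  let φ : U ≃ₜ ℝ := e.trans ((EuclideanSpace.equiv (Fin 1) ℝ).toHomeomorph.trans
    (Homeomorph.funUnique (Fin 1) ℝ))
  refine ⟨Subtype.val ∘ φ.symm, hopen.isOpenEmbedding_subtypeVal.comp φ.symm.isOpenEmbedding, ?_⟩
  rw [φ.symm.surjective.range_comp, Subtype.range_coe]

end Charts

theorem stmt8_general {M : Type u} [TopologicalSpace M]
    (hM : ∀ y : M, ∃ U : Set M, y ∈ U ∧ IsEuclidean 1 U) (x : M)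
    (hhom : ∀ y₀ ∈ NHpt x, ∀ y₁ ∈ NHpt x, ∃ h : M ≃ₜ M, h x = x ∧ h y₀ = y₁) :
    DiscreteTopology (NHpt x) := by
  rw [← isDiscrete_iff_discreteTopology]
  obtain hempty | ⟨y, hy⟩ := (NHpt x).eq_empty_or_nonempty
  · exact hempty ▸ subsingleton_empty.isDiscrete
  have hM_hausdorff := locallyHausdorff_of_isEuclidean hM
  obtain ⟨U, hyU, hU⟩ := hM y
  obtain ⟨g, hg, rfl⟩ := hU.exists_isOpenEmbedding_real
  obtain ⟨b, rfl⟩ := hyU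
  refine (isAmbientlyHomogeneous_NHpt hhom).isDiscrete_of_isOpenEmbedding_real
    (isClosed_NHpt hM_hausdorff x) hg ⟨b, hy⟩ fun huniv ↦ ?_
  have hrange : range g ⊆ interior (NHpt x) :=
    interior_maximal (preimage_eq_univ_iff.1 huniv) hg.isOpen_range
  exact (interior_NHpt hM_hausdorff x).subset (hrange (mem_range_self b))

/-- In a 1-manifold, if any two points of `NH(x)` can be exchanged by
a homeomorphism fixing `x`, then `NH(x)` is discrete. -/
theorem stmt8 {M : Type u} [TopologicalSpace M] (hM : IsNManifold M 1)
    (x : M)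
    (hhom : ∀ y₀ ∈ NHpt x, ∀ y₁ ∈ NHpt x,
      ∃ h : M ≃ₜ M, h x = x ∧ h y₀ = y₁) :
    DiscreteTopology (NHpt x) :=
  stmt8_general hM.2 x hhom
end
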